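/- Let p be a prime with p ≡ 3 (mod 4). Then T(p) = −p · (2/p) · Σ_{k=1}^{(p−1)/2} (k/p), where (2/p) and (k/p) are Legendre symbols. -/

import Mathlib

/-- `T p = √p ∑_{n=1}^{(p-1)/2} tan(π n² / p)`. -/
noncomputable def T (p : ℕ) : ℝ :=
  Real.sqrt p * ∑ n ∈ Finset.Icc 1 ((p - 1) / 2), Real.tan (Real.pi * (n : ℝ) ^ 2 / p)

open Polynomial Finset

theorem aux_sum_reflect {M : Type*} [AddCommMonoid M] (m : ℕ) (f : ℕ → M) :
    ∑ j ∈ range (2 * m + 1), f j = f 0 + ∑ k ∈ Icc 1 m, (f k + f (2 * m + 1 - k)) := by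
  rw [sum_range_succ', add_comm, sum_add_distrib, two_mul m, sum_range_add]
  congr 2
  · exact sum_nbij' (fun j => j + 1) (fun k => k - 1) (by grind) (by grind)
      (by grind) (by grind) (by grind)
  · refine sum_nbij' (fun j => m - j) (fun k => m - k) (by simp; omega) (by simp; omega)
      (by simp; omega) (by simp; omega) ?_
    intro j hj
    congr 1
    simp at hj
    omega

theorem aux_prod_reflect {M : Type*} [CommMonoid M] (m : ℕ) (f : ℕ → M) :
    ∏ j ∈ range (2 * m), f (j + 1) = ∏ k ∈ Icc 1 m, (f k * f (2 * m + 1 - k)) := by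
  rw [prod_mul_distrib, two_mul m, prod_range_add]
  congr 1
  · exact prod_nbij' (fun j => j + 1) (fun k => k - 1) (by grind) (by grind)
      (by grind) (by grind) (by grind)
  · refine prod_nbij' (fun j => m - j) (fun k => m - k) (by simp; omega) (by simp; omega)
      (by simp; omega) (by simp; omega) ?_
    intro j hj
    congr 1
    simp at hj
    omega

/-- Euler operator. -/
noncomputable def eulerD (R : Type*) [CommRing R] : R[X] →ₗ[R] R[X] :=
  (LinearMap.mulLeft R X).comp derivative

theorem eulerD_apply {R : Type*} [CommRing R] (f : R[X]) : eulerD R f = X * derivative f := rfl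

theorem eulerD_pow_eval {R : Type*} [CommRing R] (n : ℕ) : ∀ g : R[X],
    (((eulerD R) ^ n) ((X - 1) ^ n * g)).eval 1 = (n.factorial : R) * g.eval 1 := by
  induction n with
  | zero => intro g; simp
  | succ n ih =>
    intro g
    have : eulerD R ((X - 1) ^ (n + 1) * g) =
        (X - 1) ^ n * ((n + 1 : R[X]) * X * g + (X - 1) * X * derivative g) := by
      rw [eulerD_apply, derivative_mul, derivative_pow]
      simp
      ring
    rw [pow_succ, Module.End.mul_apply, this, ih]
    simp [Nat.factorial_succ]
    ring

theorem eulerD_pow_monomial {R : Type*} [CommRing R] (n : ℕ) (a : R) (j : ℕ) :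
    ((eulerD R) ^ n) (C a * X ^ j) = C (a * (j : R) ^ n) * X ^ j := by
  induction n with
  | zero => simp
  | succ n ih =>
    rw [pow_succ', Module.End.mul_apply, ih, eulerD_apply]
    rw [derivative_C_mul_X_pow]
    rcases j with _ | j
    · simp
    · rw [Nat.add_sub_cancel, pow_succ, pow_succ]
      simp only [map_mul]
      ring

theorem aux_sum_zmod {M : Type*} [AddCommMonoid M] (p : ℕ) [NeZero p] (f : ZMod p → M) :
    ∑ a : ZMod p, f a = ∑ j ∈ range p, f (j : ZMod p) := by
  refine sum_nbij' (fun a => a.val) (fun j => (j : ZMod p)) ?_ ?_ ?_ ?_ ?_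
  · intro a _; simp [ZMod.val_lt]
  · simp
  · simp
  · intro j hj; simp at hj; exact ZMod.val_cast_of_lt hj
  · simp

theorem aux_cyc (p : ℕ) [Fact p.Prime] : cyclotomic p (ZMod p) = (X - 1) ^ (p - 1) := by
  have h := cyclotomic_prime_mul_X_sub_one (ZMod p) p
  have h2 : (X - 1 : (ZMod p)[X]) ^ p = X ^ p - 1 := by
    rw [sub_pow_char]; simp
  have h0 : (X - 1 : (ZMod p)[X]) ≠ 0 := X_sub_C_ne_zero 1
  apply mul_right_cancel₀ h0
  rw [h, ← h2, ← pow_succ, Nat.sub_add_cancel (Fact.out : p.Prime).one_le]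

theorem aux_sum_pow (p m : ℕ) [Fact p.Prime] (hm : p = 2 * m + 1) :
    ∑ j ∈ range p, (j : ZMod p) ^ (2 * m) = -1 := by
  have hp := (Fact.out : p.Prime).two_le
  rw [← aux_sum_zmod p (fun a => a ^ (2 * m))]
  have : ∀ a : ZMod p, a ^ (2 * m) = 1 - if a = 0 then 1 else 0 := by
    intro a
    split_ifs with h
    · rw [h, zero_pow (by omega)]; simp
    · have := ZMod.pow_card_sub_one_eq_one h
      rw [show 2 * m = p - 1 by omega, this]; simp
  simp [this]

theorem aux_alg (p m : ℕ) [Fact p.Prime] (hm : p = 2 * m + 1) (ζ : ℂ) (hζ : IsPrimitiveRoot ζ p)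
    (ε : ℤ)
    (h : ∑ j ∈ range p, (legendreSym p j : ℂ) * ζ ^ j
      = ε * ∏ k ∈ Icc 1 m, (ζ ^ k - ζ ^ (p - k))) :
    (-1 : ZMod p) = ε * (m.factorial * ∏ k ∈ Icc 1 m, (2 * (k : ZMod p))) := by
  have hp := (Fact.out : p.Prime)
  have hp2 := hp.two_le
  set F : ℤ[X] := ∑ j ∈ range p, C (legendreSym p j) * X ^ j -
    C ε * ∏ k ∈ Icc 1 m, (X ^ k - X ^ (p - k)) with hF
  have h1 : aeval ζ F = 0 := by
    simp [hF, map_sum, map_prod, h]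
  have h2 : cyclotomic p ℤ ∣ F := by
    rw [cyclotomic_eq_minpoly hζ hp.pos]
    exact minpoly.isIntegrallyClosed_dvd (hζ.isIntegral hp.pos) h1
  have h3 := Polynomial.map_dvd (Int.castRingHom (ZMod p)) h2
  rw [map_cyclotomic, aux_cyc] at h3
  obtain ⟨Q, hQ⟩ := h3
  have e1 : ((eulerD (ZMod p) ^ m) (F.map (Int.castRingHom (ZMod p)))).eval 1 = 0 := by
    rw [hQ, show p - 1 = m + m by omega, pow_add, mul_assoc, eulerD_pow_eval]
    have : m ≠ 0 := by omega
    simp [this]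
  have key : ∀ k ∈ Icc 1 m, ∃ g : (ZMod p)[X], (X ^ k - X ^ (p - k) : (ZMod p)[X]) = (X - 1) * g ∧
      g.eval 1 = 2 * (k : ZMod p) := by
    intro k hk
    simp at hk
    have : (X - C 1 : (ZMod p)[X]) ∣ X ^ k - X ^ (p - k) := by
      rw [dvd_iff_isRoot]; simp
    obtain ⟨g, hg⟩ := this
    refine ⟨g, by simpa using hg, ?_⟩
    have := congrArg (fun f => (derivative f).eval 1) hg
    simp [derivative_mul, derivative_X_pow] at this
    rw [← this, Nat.cast_sub (by omega)]
    simp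
    ring
  choose! g hg1 hg2 using key
  rw [hF, Polynomial.map_sub, map_sub, eval_sub, sub_eq_zero] at e1
  simp only [Polynomial.map_sum, Polynomial.map_mul, Polynomial.map_C, Polynomial.map_pow,
    Polynomial.map_X, Polynomial.map_prod, Polynomial.map_sub, map_sum, eulerD_pow_monomial] at e1
  rw [prod_congr rfl hg1, prod_mul_distrib, prod_const, Nat.card_Icc,
    ← mul_assoc, mul_comm (C _), mul_assoc, Nat.add_sub_cancel, eulerD_pow_eval] at e1
  rw [eval_mul, eval_prod, prod_congr rfl hg2] at e1
  simp [eval_finsetSum, legendreSym.eq_pow] at e1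
  rw [show p / 2 = m by omega] at e1
  rw [← aux_sum_pow p m hm]
  rw [mul_left_comm, ← e1]
  simp [two_mul, pow_add]

open Complex in
theorem aux_psi (p : ℕ) [NeZero p] (j : ℕ) :
    ZMod.stdAddChar (j : ZMod p) = (Complex.exp (2 * Real.pi * I / p)) ^ j := by
  have := ZMod.stdAddChar_coe (N := p) (j : ℤ)
  rw [Int.cast_natCast] at this
  rw [this, ← Complex.exp_nat_mul]
  congr 1
  push_cast
  ring

/-- quadratic character with complex values -/
noncomputable def qchi (p : ℕ) [Fact p.Prime] : MulChar (ZMod p) ℂ :=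
  (quadraticChar (ZMod p)).ringHomComp (Int.castRingHom ℂ)

theorem qchi_apply (p : ℕ) [Fact p.Prime] (a : ZMod p) :
    qchi p a = (quadraticChar (ZMod p) a : ℂ) := rfl

theorem qchi_nat (p : ℕ) [Fact p.Prime] (j : ℕ) :
    qchi p (j : ZMod p) = (legendreSym p j : ℂ) := by
  simp [qchi_apply, legendreSym]

theorem qchi_quad (p : ℕ) [Fact p.Prime] : (qchi p).IsQuadratic :=
  (quadraticChar_isQuadratic (ZMod p)).comp _

theorem qchi_ne (p : ℕ) [Fact p.Prime] (hp : p ≠ 2) : qchi p ≠ 1 := by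
  have h := quadraticChar_ne_one (F := ZMod p) (by rwa [ZMod.ringChar_zmod_n])
  intro h1
  apply h
  ext a
  have := congrArg (fun c : MulChar (ZMod p) ℂ => c a) h1
  simp only [qchi_apply, MulChar.one_apply_coe] at this
  simp
  exact_mod_cast this

theorem aux_gauss_sq (p : ℕ) [Fact p.Prime] (h3 : p % 4 = 3) :
    gaussSum (qchi p) (ZMod.stdAddChar (N := p)) ^ 2 = -p := by
  rw [gaussSum_sq (qchi_ne p (by omega)) (qchi_quad p) (ZMod.isPrimitive_stdAddChar p)]
  have : quadraticChar (ZMod p) (-1) = -1 := by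
    rw [quadraticChar_neg_one_iff_not_isSquare, ZMod.exists_sq_eq_neg_one_iff]
    simpa using h3
  rw [qchi_apply, this, ZMod.card]
  simp

theorem aux_gauss_shift (p : ℕ) [Fact p.Prime] (a : ZMod p) (ha : a ≠ 0) :
    ∑ b : ZMod p, qchi p b * ZMod.stdAddChar (a * b) =
      qchi p a * gaussSum (qchi p) (ZMod.stdAddChar (N := p)) := by
  have := gaussSum_mulShift_eq (qchi p) (ZMod.stdAddChar (N := p)) (Units.mk0 a ha)
  rw [(qchi_quad p).inv] at this
  simpa [gaussSum, AddChar.mulShift_apply] using this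

theorem aux_quad_gauss (p : ℕ) [Fact p.Prime] (hp : p ≠ 2) (a : ZMod p) (ha : a ≠ 0) :
    ∑ n : ZMod p, ZMod.stdAddChar (a * n ^ 2) =
      qchi p a * gaussSum (qchi p) (ZMod.stdAddChar (N := p)) := by
  rw [← aux_gauss_shift p a ha]
  have h0 : ∑ b : ZMod p, ZMod.stdAddChar (a * b) = 0 := by
    have := AddChar.sum_mulShift (R := ZMod p) a (ZMod.isPrimitive_stdAddChar p)
    rw [if_neg ha] at this
    simpa [mul_comm] using this
  have h1 : ∑ n : ZMod p, ZMod.stdAddChar (a * n ^ 2) =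
      ∑ b : ZMod p, ∑ n : ZMod p with n ^ 2 = b, ZMod.stdAddChar (a * n ^ 2) :=
    (sum_fiberwise _ _ _).symm
  rw [h1]
  have h2 : ∀ b : ZMod p, ∑ n : ZMod p with n ^ 2 = b, ZMod.stdAddChar (a * n ^ 2) =
      qchi p b * ZMod.stdAddChar (a * b) + ZMod.stdAddChar (a * b) := by
    intro b
    have h3 : ∑ n : ZMod p with n ^ 2 = b, ZMod.stdAddChar (a * n ^ 2) =
        ∑ n : ZMod p with n ^ 2 = b, ZMod.stdAddChar (a * b) := by
      apply sum_congr rfl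
      intro n hn
      simp at hn
      rw [hn]
    rw [h3, sum_const, nsmul_eq_mul]
    have := quadraticChar_card_sqrts (F := ZMod p) (by rwa [ZMod.ringChar_zmod_n]) b
    have h4 : ((#{n : ZMod p | n ^ 2 = b} : ℕ) : ℂ) = qchi p b + 1 := by
      rw [qchi_apply]
      have h5 : ((#{n : ZMod p | n ^ 2 = b} : ℕ) : ℤ) = quadraticChar (ZMod p) b + 1 := by
        rw [← this]
        congr 2
        ext; simp
      exact_mod_cast h5
    rw [h4]; ring
  rw [sum_congr rfl (fun b _ => h2 b), sum_add_distrib, h0, add_zero]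

open Complex in
theorem aux_P (p m : ℕ) [Fact p.Prime] (hm : p = 2 * m + 1) :
    ∏ k ∈ Icc 1 m, ((Complex.exp (2 * Real.pi * I / p)) ^ k
      - (Complex.exp (2 * Real.pi * I / p)) ^ (p - k)) = I ^ m * (Real.sqrt p : ℂ) := by
  have hp := (Fact.out : p.Prime)
  have hpr : (0 : ℝ) < p := by exact_mod_cast hp.pos
  have hpc : (p : ℂ) ≠ 0 := by exact_mod_cast hp.ne_zero
  set ζ := Complex.exp (2 * Real.pi * I / p) with hζdef
  have hζ : IsPrimitiveRoot ζ p := Complex.isPrimitiveRoot_exp p hp.ne_zero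
  set R : ℝ := ∏ k ∈ Icc 1 m, (2 * Real.sin (2 * Real.pi * k / p)) with hR
  have hRpos : 0 < R := by
    apply prod_pos
    intro k hk
    simp at hk
    have h1 : (1 : ℝ) ≤ k := by exact_mod_cast hk.1
    have h2 : (2 : ℝ) * k < p := by
      have : 2 * k < p := by omega
      exact_mod_cast this
    have := Real.sin_pos_of_pos_of_lt_pi (x := 2 * Real.pi * k / p) (by positivity) (by
      rw [div_lt_iff₀ hpr]
      nlinarith [Real.pi_pos])
    linarith
  have hterm : ∀ k ∈ Icc 1 m, ζ ^ k - ζ ^ (p - k) =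
      I * ((2 * Real.sin (2 * Real.pi * k / p) : ℝ) : ℂ) := by
    intro k hk
    simp at hk
    have h1 : ζ ^ (p - k) = (ζ ^ k)⁻¹ := by
      apply eq_inv_of_mul_eq_one_left
      rw [← pow_add, Nat.sub_add_cancel (by omega), hζ.pow_eq_one]
    rw [h1, hζdef, ← Complex.exp_nat_mul, ← Complex.exp_neg]
    push_cast
    rw [Complex.sin]
    have e1 : -(2 * (Real.pi : ℂ) * k / p) * I = -(k * (2 * Real.pi * I / p)) := by ring
    have e2 : (2 * (Real.pi : ℂ) * k / p) * I = (k * (2 * Real.pi * I / p)) := by ring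
    rw [e1, e2]
    linear_combination (-Complex.exp (k * (2 * Real.pi * I / p)) + Complex.exp (-(k * (2 * Real.pi * I / p)))) * (-Complex.I_sq)
  have hP : ∏ k ∈ Icc 1 m, (ζ ^ k - ζ ^ (p - k)) = I ^ m * (R : ℂ) := by
    rw [prod_congr rfl hterm, prod_mul_distrib, prod_const, Nat.card_Icc, Nat.add_sub_cancel, hR]
    push_cast
    rfl
  have hsq : (p : ℂ) = (-1) ^ m * (∏ k ∈ Icc 1 m, (ζ ^ k - ζ ^ (p - k))) ^ 2 := by
    have hω : IsPrimitiveRoot (ζ ^ 2) (2 * m + 1) := by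
      rw [← hm]
      apply hζ.pow_of_coprime
      rw [hm]
      simp
    have := hω.prod_one_sub_pow_eq_order
    rw [aux_prod_reflect m (fun k => 1 - (ζ ^ 2) ^ k)] at this
    have e : (p : ℂ) = ((2 * m : ℕ) : ℂ) + 1 := by rw [hm]; push_cast; ring
    rw [e, ← this, ← prod_pow]
    have : (-1 : ℂ) ^ m = ∏ k ∈ Icc 1 m, (-1 : ℂ) := by simp
    rw [this, ← prod_mul_distrib]
    apply prod_congr rfl
    intro k hk
    simp at hk
    have h1 : ζ ^ (p - k) * ζ ^ k = 1 := by
      rw [← pow_add, Nat.sub_add_cancel (by omega), hζ.pow_eq_one]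
    rw [← hm, pow_right_comm, pow_right_comm ζ 2]
    linear_combination (ζ ^ (p - k) * ζ ^ k - 1) * h1
  rw [hP, mul_pow, ← pow_mul, mul_comm m 2, pow_mul, I_sq, ← mul_assoc, ← mul_pow] at hsq
  norm_num at hsq
  rw [hP]
  have : R = Real.sqrt p := by
    rw [eq_comm, Real.sqrt_eq_iff_mul_self_eq hpr.le hRpos.le, ← pow_two]
    exact_mod_cast hsq
  rw [this]

open Complex in
theorem aux_G (p m : ℕ) [Fact p.Prime] (hm : p = 2 * m + 1) (h3 : p % 4 = 3) :
    gaussSum (qchi p) (ZMod.stdAddChar (N := p)) = I * (Real.sqrt p : ℂ) := by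
  have hp := (Fact.out : p.Prime)
  have hζ : IsPrimitiveRoot _ p := Complex.isPrimitiveRoot_exp p hp.ne_zero
  have hGs : gaussSum (qchi p) (ZMod.stdAddChar (N := p)) =
      ∑ j ∈ range p, (legendreSym p j : ℂ) * (Complex.exp (2 * Real.pi * I / p)) ^ j := by
    rw [gaussSum, aux_sum_zmod]
    simp_rw [qchi_nat, aux_psi]
  have hsq := aux_gauss_sq p h3
  have hs : (Real.sqrt p : ℂ) ^ 2 = p := by
    have := Real.sq_sqrt (x := (p : ℝ)) (by positivity)
    exact_mod_cast this
  obtain ⟨q, hq⟩ : ∃ q, m = 2 * q + 1 := ⟨m / 2, by omega⟩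
  have hI : (I : ℂ) ^ m = (-1) ^ q * I := by
    rw [hq, pow_succ, pow_mul, I_sq]
  have hE : ∃ ε : ℤ, (ε = 1 ∨ ε = -1) ∧ gaussSum (qchi p) (ZMod.stdAddChar (N := p)) =
      ε * (I ^ m * (Real.sqrt p : ℂ)) := by
    have : gaussSum (qchi p) (ZMod.stdAddChar (N := p)) ^ 2 = (I ^ m * (Real.sqrt p : ℂ)) ^ 2 := by
      rw [hsq, hI, mul_pow, mul_pow, hs, I_sq, ← pow_mul, mul_comm q 2, pow_mul]
      simp
    rcases sq_eq_sq_iff_eq_or_eq_neg.1 this with h | h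
    · exact ⟨1, Or.inl rfl, by simpa using h⟩
    · exact ⟨-1, Or.inr rfl, by simpa using h⟩
  obtain ⟨ε, hε, hG⟩ := hE
  have halg := aux_alg p m hm _ hζ ε (by rw [← hGs, aux_P p m hm, hG])
  rw [prod_mul_distrib, prod_const, Nat.card_Icc, Nat.add_sub_cancel] at halg
  have hfac : ∏ k ∈ Icc 1 m, (k : ZMod p) = m.factorial := by
    clear * -
    induction m with
    | zero => simp
    | succ n ih => rw [Finset.prod_Icc_succ_top (by omega), ih, Nat.factorial_succ]; push_cast; ring
  have h2m : (2 : ZMod p) ^ m = (legendreSym p 2 : ZMod p) := by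
    rw [legendreSym.eq_pow, show p / 2 = m by omega]; simp
  rw [hfac, h2m] at halg
  have hnsq : ¬ IsSquare (-1 : ZMod p) := by
    rw [ZMod.exists_sq_eq_neg_one_iff]; simpa using h3
  have hleg : legendreSym p 2 = (-1) ^ (q + 1) := by
    rw [legendreSym.at_two (by omega), ZMod.χ₈_nat_eq_if_mod_eight]
    rcases Nat.even_or_odd' q with ⟨r, hr | hr⟩
    · rw [if_neg (by omega), if_neg (by omega), hr, pow_succ, pow_mul]; simp
    · rw [if_neg (by omega), if_pos (by omega), hr, show 2 * r + 1 + 1 = 2 * (r + 1) by ring,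
        pow_mul]; simp
  have hεq : ε = (-1) ^ q := by
    rw [hleg] at halg
    rcases neg_one_pow_eq_or ℤ q with h | h <;> rcases hε with h' | h' <;>
      simp only [h, h', pow_succ] at halg ⊢
    · exact absurd ⟨_, by simpa using halg⟩ hnsq
    · exact absurd ⟨(m.factorial : ZMod p), by simpa using halg⟩ hnsq
  rw [hG, hI, hεq]
  push_cast
  rw [← mul_assoc, ← mul_assoc, ← mul_pow]
  simp

open Complex in
theorem aux_tan (p a : ℕ) [Fact p.Prime] (hodd : p % 2 = 1) :
    I * (Real.tan (Real.pi * a / p) : ℂ) =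
      1 - ∑ j ∈ range p, (-1) ^ j * ZMod.stdAddChar ((j : ZMod p) * (a : ZMod p)) := by
  have hp := (Fact.out : p.Prime)
  have hpc : (p : ℂ) ≠ 0 := by exact_mod_cast hp.ne_zero
  have hζ : IsPrimitiveRoot _ p := Complex.isPrimitiveRoot_exp p hp.ne_zero
  set v := Complex.exp (Real.pi * a / p * I) with hv
  have hv0 : v ≠ 0 := Complex.exp_ne_zero _
  have hw : (Complex.exp (2 * Real.pi * I / p)) ^ a = v ^ 2 := by
    rw [hv, ← Complex.exp_nat_mul, ← Complex.exp_nat_mul]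
    congr 1
    push_cast
    ring
  have hwp : (v ^ 2) ^ p = 1 := by
    rw [← hw, pow_right_comm, hζ.pow_eq_one, one_pow]
  have hneg : (-(v ^ 2)) ^ p = -1 := by
    rw [Odd.neg_pow (Nat.odd_iff.2 hodd), hwp]
  have hne : 1 + v ^ 2 ≠ 0 := by
    intro h
    have : -(v ^ 2) = 1 := by linear_combination -h
    rw [this] at hneg
    norm_num at hneg
  have hsum : ∑ j ∈ range p, (-1) ^ j * ZMod.stdAddChar ((j : ZMod p) * (a : ZMod p)) =
      ∑ j ∈ range p, (-(v ^ 2)) ^ j := by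
    apply sum_congr rfl
    intro j _
    rw [← Nat.cast_mul, aux_psi, mul_comm j a, pow_mul, hw, neg_pow (v ^ 2)]
  have hgeom := geom_sum_mul (-(v ^ 2)) p
  rw [hneg] at hgeom
  rw [hsum]
  have hS : ∑ j ∈ range p, (-(v ^ 2)) ^ j = 2 / (1 + v ^ 2) := by
    rw [eq_div_iff hne]
    linear_combination -hgeom
  rw [hS]
  push_cast
  rw [Complex.tan, Complex.sin, Complex.cos]
  have e : Complex.exp (-(Real.pi * a / p) * I) = v⁻¹ := by
    rw [hv, ← Complex.exp_neg]; congr 1; ring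
  rw [e, ← hv]
  have hd : v + v⁻¹ = (1 + v ^ 2) / v := by field_simp; ring
  rw [hd]
  have hI : (I : ℂ) * I = -1 := I_mul_I
  field_simp
  linear_combination (1 - v ^ 2) * I_sq

theorem aux_sum_parity {M : Type*} [AddCommMonoid M] (m : ℕ) (f : ℕ → M) :
    ∑ j ∈ range (2 * m + 1), f j = f 0 + ∑ k ∈ Icc 1 m, (f (2 * k) + f (2 * m + 1 - 2 * k)) := by
  have h : ∑ k ∈ Icc 1 m, f (2 * m + 1 - 2 * k) = ∑ k ∈ Icc 1 m, f (2 * k - 1) := by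
    refine sum_nbij' (fun k => m + 1 - k) (fun k => m + 1 - k) (by simp; omega) (by simp; omega)
      (by simp; omega) (by simp; omega) ?_
    intro j hj
    congr 1
    simp at hj
    omega
  rw [sum_add_distrib, h, ← sum_add_distrib]
  clear h
  induction m with
  | zero => simp
  | succ n ih =>
    rw [show 2 * (n + 1) + 1 = 2 * n + 1 + 1 + 1 by ring, sum_range_succ, sum_range_succ, ih,
      sum_Icc_succ_top (by omega), show 2 * (n + 1) - 1 = 2 * n + 1 by omega,
      show 2 * (n + 1) = 2 * n + 1 + 1 by ring, add_assoc, add_assoc, add_comm (f (2 * n + 1))]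

theorem aux_neg (p : ℕ) [Fact p.Prime] (h3 : p % 4 = 3) (k : ℕ) (hk : k ≤ p) :
    legendreSym p ((p - k : ℕ) : ℤ) = - legendreSym p k := by
  have : legendreSym p ((p - k : ℕ) : ℤ) = legendreSym p (-k) := by
    simp only [legendreSym]
    congr 1
    push_cast [Nat.cast_sub hk]
    simp
  rw [this, legendreSym.at_neg (by omega), ZMod.χ₄_nat_three_mod_four h3]
  ring

theorem aux_alt_sum (p m : ℕ) [Fact p.Prime] (hm : p = 2 * m + 1) (h3 : p % 4 = 3) :
    ∑ j ∈ range p, (-1) ^ j * legendreSym p j =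
      2 * (legendreSym p 2 * ∑ k ∈ Icc 1 m, legendreSym p k) := by
  have := aux_sum_parity m (fun j => (-1) ^ j * legendreSym p j)
  rw [← hm] at this
  rw [this, mul_sum, mul_sum]
  simp only [Nat.cast_zero, legendreSym.at_zero, mul_zero, zero_add]
  apply sum_congr rfl
  intro k hk
  simp at hk
  have ho : Odd (p - 2 * k) := Nat.odd_iff.2 (by omega)
  rw [ho.neg_one_pow, aux_neg p h3 _ (by omega), pow_mul, Nat.cast_mul, legendreSym.mul]
  simp
  ring

open Complex in
theorem aux_main (p m : ℕ) [Fact p.Prime] (hm : p = 2 * m + 1) (h3 : p % 4 = 3) :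
    2 * ∑ n ∈ Icc 1 m, Real.tan (Real.pi * (n : ℝ) ^ 2 / p) =
      - Real.sqrt p * (2 * (legendreSym p 2 * ∑ k ∈ Icc 1 m, legendreSym p k) : ℤ) := by
  have hp := (Fact.out : p.Prime)
  rw [← aux_alt_sum p m hm h3]
  have hr := aux_sum_reflect m
    (fun n => 1 - ∑ j ∈ range p, (-1) ^ j * ZMod.stdAddChar ((j : ZMod p) * (n : ZMod p) ^ 2))
  rw [← hm] at hr
  have h0 : ∑ j ∈ range p, (-1 : ℂ) ^ j = 1 := by
    have := geom_sum_mul (-1 : ℂ) p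
    rw [(Nat.odd_iff.2 (by omega : p % 2 = 1)).neg_one_pow] at this
    linear_combination -this / 2
  have hrhs : ∀ k ∈ Icc 1 m,
      (1 - ∑ j ∈ range p, (-1) ^ j * ZMod.stdAddChar ((j : ZMod p) * (k : ZMod p) ^ 2)) +
      (1 - ∑ j ∈ range p, (-1) ^ j * ZMod.stdAddChar ((j : ZMod p) * ((p - k : ℕ) : ZMod p) ^ 2))
      = 2 * (I * (Real.tan (Real.pi * (k : ℝ) ^ 2 / p) : ℂ)) := by
    intro k hk
    simp at hk
    have e : ((p - k : ℕ) : ZMod p) = -k := by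
      rw [Nat.cast_sub (by omega)]; simp
    have := aux_tan p (k ^ 2) (by omega)
    push_cast at this ⊢
    rw [e, neg_sq, this]
    ring
  rw [sum_congr rfl hrhs, ← mul_sum, ← mul_sum] at hr
  have hlhs : ∑ n ∈ range p,
      (1 - ∑ j ∈ range p, (-1) ^ j * ZMod.stdAddChar ((j : ZMod p) * (n : ZMod p) ^ 2)) =
      - (I * Real.sqrt p) * ((∑ j ∈ range p, (-1) ^ j * legendreSym p j : ℤ) : ℂ) := by
    rw [sum_sub_distrib, sum_comm]
    have hin : ∀ j ∈ range p, ∑ n ∈ range p,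
        (-1) ^ j * ZMod.stdAddChar ((j : ZMod p) * (n : ZMod p) ^ 2) =
        (-1) ^ j * ((legendreSym p j : ℂ) * (I * Real.sqrt p)) + if j = 0 then (p : ℂ) else 0 := by
      intro j hj
      simp at hj
      rw [← mul_sum]
      by_cases hj0 : j = 0
      · simp [hj0]
      · have hjz : (j : ZMod p) ≠ 0 := by
          rw [Ne, ZMod.natCast_eq_zero_iff]
          intro hd
          exact absurd (Nat.le_of_dvd (by omega) hd) (by omega)
        rw [← aux_sum_zmod p (fun n => ZMod.stdAddChar ((j : ZMod p) * n ^ 2)),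
          aux_quad_gauss p (by omega) _ hjz, aux_G p m hm h3, qchi_nat, if_neg hj0, add_zero]
    rw [sum_congr rfl hin, sum_add_distrib]
    simp [hp.pos, mul_sum]
    apply sum_congr rfl
    intro j _
    ring
  rw [hlhs] at hr
  simp [h0] at hr
  have hfin : I * ((2 * ∑ n ∈ Icc 1 m, Real.tan (Real.pi * (n : ℝ) ^ 2 / p) : ℝ) : ℂ) =
      I * ((- Real.sqrt p * (∑ j ∈ range p, (-1) ^ j * legendreSym p j : ℤ) : ℝ) : ℂ) := by
    push_cast
    linear_combination -hr
  exact_mod_cast mul_left_cancel₀ I_ne_zero hfin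

theorem T_eq_neg_p_legendre_two_mul_half_sum (p : ℕ) [Fact p.Prime] (h3 : p % 4 = 3) :
    T p = -(p : ℝ) * (legendreSym p 2 : ℝ) *
      ∑ k ∈ Finset.Icc 1 ((p - 1) / 2), (legendreSym p (k : ℤ) : ℝ) := by
  obtain ⟨m, hm⟩ : ∃ m, p = 2 * m + 1 := ⟨p / 2, by omega⟩
  have h := aux_main p m hm h3
  have hs := Real.mul_self_sqrt (Nat.cast_nonneg (α := ℝ) p)
  rw [T, show (p - 1) / 2 = m by omega]
  push_cast at h
  linear_combination (Real.sqrt p / 2) * h - (legendreSym p 2 : ℝ) *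
      (∑ k ∈ Finset.Icc 1 m, (legendreSym p (k : ℤ) : ℝ)) * hs
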